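/- The cubic polynomial 6x^3 - 11√(π/2) x^2 + (6 + 2π) x - 5√(π/2) has exactly one real root, and this root lies in the interval (1.35, 1.36). -/

import Mathlib

open Real

/-!
The derivative of the cubic has negative discriminant, so the cubic is strictly increasing on the
whole line. Sign changes between `1.35` and `1.36` then give existence, uniqueness and location of
the root at once; checking these signs needs `√(π / 2)` to three decimals only.
-/

theorem strictMono_cubic_of_sq_le {R : Type*} [CommRing R] [LinearOrder R] [IsStrictOrderedRing R]
    {a b c : R} (ha : 0 < a) (h : b ^ 2 ≤ 3 * a * c) (d : R) :
    StrictMono fun x : R => a * x ^ 3 + b * x ^ 2 + c * x + d := by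
  intro x y hxy
  have hyx : 0 < y - x := sub_pos.2 hxy
  have hquot : 0 < a * (x ^ 2 + x * y + y ^ 2) + b * (x + y) + c := by
    refine pos_of_mul_pos_right (a := 12 * a) ?_ (by positivity)
    calc
      0 < 3 * (a * (y - x)) ^ 2 + (3 * a * (x + y) + 2 * b) ^ 2 + 4 * (3 * a * c - b ^ 2) := by
        linarith [pow_pos (mul_pos ha hyx) 2, sq_nonneg (3 * a * (x + y) + 2 * b)]
      _ = 12 * a * (a * (x ^ 2 + x * y + y ^ 2) + b * (x + y) + c) := by ring
  refine sub_pos.1 ?_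
  calc
    0 < (y - x) * (a * (x ^ 2 + x * y + y ^ 2) + b * (x + y) + c) := mul_pos hyx hquot
    _ = a * y ^ 3 + b * y ^ 2 + c * y + d - (a * x ^ 3 + b * x ^ 2 + c * x + d) := by ring

theorem sqrt_pi_div_two_gt_d3 : 1.253 < √(π / 2) :=
  lt_sqrt_of_sq_lt (by linarith [pi_gt_d4])

theorem sqrt_pi_div_two_lt_d3 : √(π / 2) < 1.254 :=
  (sqrt_lt' (by norm_num)).2 (by linarith [pi_lt_d4])

/-- The cubic in `x = τ k` whose real root determines the critical wave number `k` of the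
diffusion mode. -/
noncomputable def diffusionCubic (x : ℝ) : ℝ :=
  6 * x ^ 3 - 11 * √(π / 2) * x ^ 2 + (6 + 2 * π) * x - 5 * √(π / 2)

theorem continuous_diffusionCubic : Continuous diffusionCubic := by
  unfold diffusionCubic
  fun_prop

theorem strictMono_diffusionCubic : StrictMono diffusionCubic := by
  have hdiscr : (-(11 * √(π / 2))) ^ 2 ≤ 3 * 6 * (6 + 2 * π) := by
    rw [neg_sq, mul_pow, sq_sqrt (by positivity)]
    linarith [pi_le_four]
  unfold diffusionCubic
  simpa only [neg_mul, ← sub_eq_add_neg] using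
    strictMono_cubic_of_sq_le (by norm_num) hdiscr (-(5 * √(π / 2)))

theorem diffusionCubic_left_neg : diffusionCubic 1.35 < 0 := by
  unfold diffusionCubic
  linarith [pi_lt_d4, sqrt_pi_div_two_gt_d3]

theorem diffusionCubic_right_pos : 0 < diffusionCubic 1.36 := by
  unfold diffusionCubic
  linarith [pi_gt_d4, sqrt_pi_div_two_lt_d3]

/-- The cubic determining the critical wave number of the diffusion mode has exactly one real
root, which lies in `(1.35, 1.36)`. -/
theorem diffusion_mode_critical_cubic :
    (∃! x : ℝ, 6*x^3 - 11 * Real.sqrt (π/2) * x^2 + (6 + 2*π) * x - 5 * Real.sqrt (π/2) = 0) ∧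
    (∀ x : ℝ, 6*x^3 - 11 * Real.sqrt (π/2) * x^2 + (6 + 2*π) * x - 5 * Real.sqrt (π/2) = 0 →
      1.35 < x ∧ x < 1.36) := by
  change (∃! x, diffusionCubic x = 0) ∧ ∀ x, diffusionCubic x = 0 → 1.35 < x ∧ x < 1.36
  have hroot : 0 ∈ Set.range diffusionCubic :=
    mem_range_of_exists_le_of_exists_ge continuous_diffusionCubic
      ⟨1.35, diffusionCubic_left_neg.le⟩ ⟨1.36, diffusionCubic_right_pos.le⟩
  refine ⟨strictMono_diffusionCubic.injective.existsUnique_of_mem_range hroot, fun x hx => ?_⟩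
  exact ⟨strictMono_diffusionCubic.lt_iff_lt.1 (diffusionCubic_left_neg.trans_eq hx.symm),
    strictMono_diffusionCubic.lt_iff_lt.1 (hx.trans_lt diffusionCubic_right_pos)⟩
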